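/- arXiv:math-ph/0609026 — 2 statements merged into one kernel-verified Lean document; each statement's English description precedes it below -/
import Mathlib

section
/- Let a > 0, m > 1, α > 0, ε₀ ∈ (0, aα), and suppose -ε₀ ≤ inf_{ξ∈ℝ} μ₁(a,m,α;ξ) ≤ ε₀. Then the set M(a,m,α) of minimizers of ξ ↦ μ₁(a,m,α;ξ) is nonempty, and every ξ ∈ M(a,m,α) satisfies |ξ| ≤ √((1+a)·(1 - 1/m)^{-1}·α). -/
open MeasureTheory Set Filter Topology

noncomputable section

/-- `B¹(ℝ₊)`-type regularity on the half line (smooth core):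
`u`, `u'` and `t·u` are square integrable on `(0,∞)`. -/
def MemB1p (u : ℝ → ℝ) : Prop :=
  Differentiable ℝ u ∧
  IntegrableOn (fun t => (u t)^2) (Ioi 0) ∧
  IntegrableOn (fun t => (deriv u t)^2) (Ioi 0) ∧
  IntegrableOn (fun t => t^2 * (u t)^2) (Ioi 0)

/-- The Robin quadratic form `q[γ,ξ]` of `-d²/dt² + (t-ξ)²` on `ℝ₊`. -/
def qRobin (γ ξ : ℝ) (u : ℝ → ℝ) : ℝ :=
  (∫ t in Ioi (0:ℝ), ((deriv u t)^2 + (t - ξ)^2 * (u t)^2)) + γ * (u 0)^2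

/-- squared `L²(ℝ₊)` norm. -/
def np (u : ℝ → ℝ) : ℝ := ∫ t in Ioi (0:ℝ), (u t)^2

/-- Lowest Robin eigenvalue `λ₁(γ,ξ)`, defined variationally. -/
def lambda1 (γ ξ : ℝ) : ℝ :=
  sInf {r : ℝ | ∃ u : ℝ → ℝ, MemB1p u ∧ np u ≠ 0 ∧ r = qRobin γ ξ u / np u}

/-- Lowest Neumann eigenvalue `λ₁^N(ξ)` (Robin with `γ = 0`). -/
def lambda1N (ξ : ℝ) : ℝ := lambda1 0 ξ

/-- Lowest Dirichlet eigenvalue `λ₁^D(ξ)`, defined variationally. -/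
def lambda1D (ξ : ℝ) : ℝ :=
  sInf {r : ℝ | ∃ u : ℝ → ℝ, MemB1p u ∧ u 0 = 0 ∧ np u ≠ 0 ∧ r = qRobin 0 ξ u / np u}

/-- The de Gennes constant `Θ₀ = inf_ξ λ₁^N(ξ)`. -/
def Theta0 : ℝ := sInf (Set.range lambda1N)

/-- `B¹(ℝ)`-type regularity on the whole line (smooth core). -/
def MemB1 (u : ℝ → ℝ) : Prop :=
  Differentiable ℝ u ∧
  Integrable (fun t => (u t)^2) ∧
  Integrable (fun t => (deriv u t)^2) ∧
  Integrable (fun t => t^2 * (u t)^2)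

/-- The interface quadratic form `Q[a,m,α;ξ]` on `B¹(ℝ)`. -/
def QI (a m α ξ : ℝ) (u : ℝ → ℝ) : ℝ :=
  (∫ t in Ioi (0:ℝ), ((deriv u t)^2 + (t - ξ)^2 * (u t)^2 - α * (u t)^2)) +
  ∫ t in Iio (0:ℝ), ((1/m) * ((deriv u t)^2 + (t - ξ)^2 * (u t)^2) + a * α * (u t)^2)

/-- squared `L²(ℝ)` norm. -/
def nR (u : ℝ → ℝ) : ℝ := ∫ t, (u t)^2

/-- Ground state energy `μ₁(a,m,α;ξ)` of the interface operator, defined variationally. -/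
def mu1 (a m α ξ : ℝ) : ℝ :=
  sInf {r : ℝ | ∃ u : ℝ → ℝ, MemB1 u ∧ nR u ≠ 0 ∧ r = QI a m α ξ u / nR u}

/-- Interface energy with potential `s²` and interface at `c`. -/
def En (a m α c : ℝ) (v : ℝ → ℝ) : ℝ :=
  (∫ t in Ioi c, ((deriv v t)^2 + t^2 * (v t)^2 - α * (v t)^2)) +
  ∫ t in Iic c, ((1/m) * ((deriv v t)^2 + t^2 * (v t)^2) + a * α * (v t)^2)

lemma MemB1.int_lin {v : ℝ → ℝ} (h : MemB1 v) : Integrable (fun t => t * (v t)^2) := by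
  obtain ⟨hd, h0, h1, h2⟩ := h
  refine (h0.add h2).mono' ?_ ?_
  · exact (continuous_id.mul (hd.continuous.pow 2)).aestronglyMeasurable
  · refine Eventually.of_forall fun t => ?_
    simp only [Pi.add_apply, Real.norm_eq_abs, abs_mul, abs_of_nonneg (sq_nonneg (v t))]
    have : |t| ≤ 1 + t^2 := by
      rcases abs_cases t with h | h <;> nlinarith [sq_nonneg (t-1), sq_nonneg (t+1)]
    nlinarith [mul_le_mul_of_nonneg_right this (sq_nonneg (v t))]

lemma MemB1.int_cross {v : ℝ → ℝ} (h : MemB1 v) : Integrable (fun t => 2 * t * v t * deriv v t) := by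
  obtain ⟨hd, h0, h1, h2⟩ := h
  refine (h1.add h2).mono' ?_ ?_
  · exact (((measurable_const.mul measurable_id).mul hd.continuous.measurable).mul
      (measurable_deriv v)).aestronglyMeasurable
  · refine Eventually.of_forall fun t => ?_
    simp only [Pi.add_apply, Real.norm_eq_abs]
    rw [abs_le]
    constructor <;> nlinarith [sq_nonneg (t * v t - deriv v t), sq_nonneg (t * v t + deriv v t)]

lemma int_shift (ξ : ℝ) {f : ℝ → ℝ} {v : ℝ → ℝ} (hv : ∀ x : ℝ, f x = v (x + ξ)) (h : Integrable v) :
    Integrable f := by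
  have := h.comp_add_right ξ
  rwa [show f = fun x => v (x + ξ) from funext hv]

lemma MemB1.int_sub {v : ℝ → ℝ} (h : MemB1 v) (ξ : ℝ) :
    Integrable (fun t => (t - ξ)^2 * (v t)^2) := by
  have := (h.2.2.2.add (h.int_lin.const_mul (-2*ξ))).add (h.2.1.const_mul (ξ^2))
  refine this.congr (Eventually.of_forall fun t => ?_)
  simp only [Pi.add_apply]; ring

lemma MemB1.shift {v : ℝ → ℝ} (h : MemB1 v) (ξ : ℝ) : MemB1 (fun s => v (s + ξ)) := by
  have h' := h
  obtain ⟨hd, h0, h1, h2⟩ := h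
  refine ⟨hd.comp (differentiable_id.add_const ξ), h0.comp_add_right ξ, ?_, ?_⟩
  · refine int_shift ξ (fun x => ?_) h1
    rw [deriv_comp_add_const]
  · exact int_shift ξ (fun x => by simp) (h'.int_sub ξ)

lemma nR_shift (v : ℝ → ℝ) (ξ : ℝ) : nR (fun s => v (s + ξ)) = nR v := by
  unfold nR
  exact integral_add_right_eq_self (fun t => (v t)^2) ξ

lemma QI_eq_En (a m α ξ : ℝ) (u : ℝ → ℝ) :
    QI a m α ξ u = En a m α (-ξ) (fun s => u (s + ξ)) := by
  unfold QI En
  have mp := measurePreserving_add_right (volume : Measure ℝ) ξ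
  have me := measurableEmbedding_addRight ξ
  rw [← integral_Iic_eq_integral_Iio, ← mp.setIntegral_preimage_emb me _ (Ioi 0),
    ← mp.setIntegral_preimage_emb me _ (Iic 0)]
  simp only [preimage_add_const_Ioi, preimage_add_const_Iic, zero_sub, deriv_comp_add_const,
    add_sub_cancel_right]

lemma nR_nonneg (v : ℝ → ℝ) : 0 ≤ nR v := integral_nonneg fun _ => sq_nonneg _

lemma nR_split {v : ℝ → ℝ} (h : MemB1 v) (c : ℝ) :
    nR v = (∫ t in Iic c, (v t)^2) + ∫ t in Ioi c, (v t)^2 :=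
  (intervalIntegral.integral_Iic_add_Ioi h.2.1.integrableOn h.2.1.integrableOn).symm

lemma MemB1.int_dens {v : ℝ → ℝ} (h : MemB1 v) (p q r : ℝ) :
    Integrable (fun t => p * (deriv v t)^2 + q * (t^2 * (v t)^2) + r * (v t)^2) :=
  ((h.2.2.1.const_mul p).add (h.2.2.2.const_mul q)).add (h.2.1.const_mul r)

lemma hasDerivAt_aux {v : ℝ → ℝ} (h : MemB1 v) (t : ℝ) :
    HasDerivAt (fun t => t * (v t)^2) ((v t)^2 + 2 * t * v t * deriv v t) t := by
  have := (hasDerivAt_id t).mul ((h.1 t).hasDerivAt.pow 2)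
  refine HasDerivAt.congr_deriv (f := fun t => t * (v t)^2) this ?_
  simp only [id, Pi.pow_apply]
  push_cast
  ring

lemma bdry_Ioi {v : ℝ → ℝ} (h : MemB1 v) (c : ℝ) :
    (∫ t in Ioi c, ((v t)^2 + 2 * t * v t * deriv v t)) = - (c * (v c)^2) := by
  have hi := (h.2.1.add h.int_cross).integrableOn (s := Ioi c)
  have ht := tendsto_zero_of_hasDerivAt_of_integrableOn_Ioi (a := c)
    (fun t _ => hasDerivAt_aux h t) hi h.int_lin.integrableOn
  have := integral_Ioi_of_hasDerivAt_of_tendsto' (a := c)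
    (fun t _ => hasDerivAt_aux h t) hi ht
  rw [this]; ring

lemma bdry_Iic {v : ℝ → ℝ} (h : MemB1 v) (c : ℝ) :
    (∫ t in Iic c, ((v t)^2 + 2 * t * v t * deriv v t)) = c * (v c)^2 := by
  have hi := (h.2.1.add h.int_cross).integrableOn (s := Iic c)
  have ht := tendsto_zero_of_hasDerivAt_of_integrableOn_Iic (a := c)
    (fun t _ => hasDerivAt_aux h t) hi h.int_lin.integrableOn
  have := integral_Iic_of_hasDerivAt_of_tendsto' (a := c)
    (fun t _ => hasDerivAt_aux h t) hi ht
  rw [this]; ring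

/-- Kinetic plus potential energy on a set. -/
def KE (s : Set ℝ) (v : ℝ → ℝ) : ℝ := ∫ t in s, ((deriv v t)^2 + t^2 * (v t)^2)

lemma En_eq {v : ℝ → ℝ} (h : MemB1 v) (a m α c : ℝ) :
    En a m α c v = KE (Ioi c) v - α * (∫ t in Ioi c, (v t)^2) +
      ((1/m) * KE (Iic c) v + a * α * ∫ t in Iic c, (v t)^2) := by
  unfold En KE
  have hk : Integrable (fun t => (deriv v t)^2 + t^2 * (v t)^2) := h.2.2.1.add h.2.2.2
  rw [integral_sub hk.integrableOn (h.2.1.const_mul α).integrableOn,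
    integral_add (hk.const_mul (1/m)).integrableOn (h.2.1.const_mul (a*α)).integrableOn,
    integral_const_mul, integral_const_mul, integral_const_mul]

lemma KE_Ioi {v : ℝ → ℝ} (h : MemB1 v) (c : ℝ) :
    (∫ t in Ioi c, (v t)^2) + c * (v c)^2 ≤ KE (Ioi c) v := by
  have hk : Integrable (fun t => (deriv v t)^2 + t^2 * (v t)^2) := h.2.2.1.add h.2.2.2
  have hp : 0 ≤ ∫ t in Ioi c, (((deriv v t)^2 + t^2 * (v t)^2) + 2 * t * v t * deriv v t) :=
    integral_nonneg fun t => by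
      have := sq_nonneg (deriv v t + t * v t)
      simp only [Pi.zero_apply]; nlinarith
  rw [integral_add hk.integrableOn h.int_cross.integrableOn] at hp
  have hb := bdry_Ioi h c
  rw [integral_add h.2.1.integrableOn h.int_cross.integrableOn] at hb
  unfold KE; linarith

lemma KE_Iic {v : ℝ → ℝ} (h : MemB1 v) (c : ℝ) :
    (∫ t in Iic c, (v t)^2) - c * (v c)^2 ≤ KE (Iic c) v := by
  have hk : Integrable (fun t => (deriv v t)^2 + t^2 * (v t)^2) := h.2.2.1.add h.2.2.2
  have hp : 0 ≤ ∫ t in Iic c, (((deriv v t)^2 + t^2 * (v t)^2) + 2 * t * v t * deriv v t) :=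
    integral_nonneg fun t => by
      have := sq_nonneg (deriv v t + t * v t)
      simp only [Pi.zero_apply]; nlinarith
  rw [integral_add hk.integrableOn h.int_cross.integrableOn] at hp
  have hb := bdry_Iic h c
  rw [integral_add h.2.1.integrableOn h.int_cross.integrableOn] at hb
  unfold KE; linarith

lemma En_ge {v : ℝ → ℝ} (h : MemB1 v) {a m α c κ : ℝ} (hm : 1 < m)
    (h1 : κ ≤ 1 - α) (h2 : κ ≤ 1/m + a * α) :
    κ * nR v + (1 - 1/m) * (c * (v c)^2) ≤ En a m α c v := by
  rw [En_eq h, nR_split h c]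
  have p1 : 0 ≤ ∫ t in Iic c, (v t)^2 := integral_nonneg fun _ => sq_nonneg _
  have p2 : 0 ≤ ∫ t in Ioi c, (v t)^2 := integral_nonneg fun _ => sq_nonneg _
  have k1 := KE_Ioi h c
  have hm' : 0 ≤ 1/m := by positivity
  have k2 := mul_le_mul_of_nonneg_left (KE_Iic h c) hm'
  have q1 := mul_le_mul_of_nonneg_right h1 p2
  have q2 := mul_le_mul_of_nonneg_right h2 p1
  nlinarith

lemma En_diff {v : ℝ → ℝ} (h : MemB1 v) (a m α : ℝ) {c c' : ℝ} (hc : c ≤ c') :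
    En a m α c v = En a m α c' v + ∫ t in Ioc c c',
      ((1 - 1/m) * ((deriv v t)^2 + t^2 * (v t)^2) - (1 + a) * α * (v t)^2) := by
  have hk : Integrable (fun t => (deriv v t)^2 + t^2 * (v t)^2) := h.2.2.1.add h.2.2.2
  rw [En_eq h, En_eq h,
    integral_sub (hk.const_mul _).integrableOn (h.2.1.const_mul _).integrableOn,
    integral_const_mul, integral_const_mul]
  have split1 : ∀ f : ℝ → ℝ, Integrable f →
      ∫ t in Ioi c, f t = (∫ t in Ioc c c', f t) + ∫ t in Ioi c', f t := by
    intro f hf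
    rw [← setIntegral_union Ioc_disjoint_Ioi_same measurableSet_Ioi hf.integrableOn
      hf.integrableOn, Ioc_union_Ioi_eq_Ioi hc]
  have split2 : ∀ f : ℝ → ℝ, Integrable f →
      ∫ t in Iic c', f t = (∫ t in Iic c, f t) + ∫ t in Ioc c c', f t := by
    intro f hf
    rw [← setIntegral_union (Iic_disjoint_Ioc le_rfl) measurableSet_Ioc hf.integrableOn
      hf.integrableOn, Iic_union_Ioc_eq_Iic hc]
  unfold KE
  rw [split1 _ hk, split1 _ h.2.1, split2 _ hk, split2 _ h.2.1]
  ring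

/-- Moving the interface inside a region where `t² ≥ D²` and `v² ≥ η`. -/
lemma En_mono {v : ℝ → ℝ} (h : MemB1 v) {a m α d D η : ℝ} (hm : 1 < m)
    (hd : (1 - 1/m) * d^2 = (1 + a) * α) {c c' : ℝ} (hc : c ≤ c')
    (hdD : d^2 ≤ D^2) (hD : ∀ t ∈ Ioc c c', D^2 ≤ t^2)
    (hη : ∀ t ∈ Ioc c c', η ≤ (v t)^2) :
    En a m α c' v + (c' - c) * ((1 - 1/m) * (D^2 - d^2) * η) ≤ En a m α c v := by
  have hk : Integrable (fun t => (deriv v t)^2 + t^2 * (v t)^2) := h.2.2.1.add h.2.2.2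
  have hk0 : 0 ≤ 1 - 1/m := by
    have : 1/m ≤ 1 := by rw [div_le_one (by linarith)]; exact hm.le
    linarith
  rw [En_diff h a m α hc]
  have : ∫ t in Ioc c c', ((1 - 1/m) * (D^2 - d^2) * η) ≤ ∫ t in Ioc c c',
      ((1 - 1/m) * ((deriv v t)^2 + t^2 * (v t)^2) - (1 + a) * α * (v t)^2) := by
    refine setIntegral_mono_on ?_ ?_ measurableSet_Ioc fun t ht => ?_
    · exact integrableOn_const (by simp)
    · exact ((hk.const_mul _).sub (h.2.1.const_mul _)).integrableOn
    · have e1 := mul_le_mul_of_nonneg_left (hη t ht) (mul_nonneg hk0 (sub_nonneg.2 hdD))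
      have e2 := mul_le_mul_of_nonneg_left (mul_le_mul_of_nonneg_right (hD t ht)
        (sq_nonneg (v t))) hk0
      have e3 := mul_nonneg hk0 (sq_nonneg (deriv v t))
      rw [← hd]
      nlinarith
  rw [setIntegral_const] at this
  simp only [Measure.real, Real.volume_Ioc, ENNReal.toReal_ofReal (sub_nonneg.2 hc),
    smul_eq_mul] at this
  linarith

lemma hasDerivAt_gauss (t : ℝ) :
    HasDerivAt (fun t => Real.exp (-t^2/2)) (-t * Real.exp (-t^2/2)) t := by
  have h1 : HasDerivAt (fun t : ℝ => -t^2/2) (-t) t :=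
    HasDerivAt.congr_deriv (((hasDerivAt_pow 2 t).fun_neg).div_const 2) (by push_cast; ring)
  exact h1.exp.congr_deriv (by ring)

lemma memB1_gauss : MemB1 (fun t => Real.exp (-t^2/2)) := by
  have hder : ∀ t : ℝ, HasDerivAt (fun t => Real.exp (-t^2/2)) (-t * Real.exp (-t^2/2)) t := by
    intro t
    exact hasDerivAt_gauss t
  have hsq : ∀ t : ℝ, Real.exp (-t^2/2)^2 = Real.exp (-1 * t^2) := by
    intro t
    rw [← Real.exp_nat_mul]; congr 1; push_cast; ring
  have h2 : Integrable (fun t : ℝ => t^2 * Real.exp (-1 * t^2)) := by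
    have := integrable_rpow_mul_exp_neg_mul_sq (b := 1) one_pos (s := 2) (by norm_num)
    simpa using this
  refine ⟨fun t => (hder t).differentiableAt, ?_, ?_, ?_⟩
  · simp only [hsq]; exact integrable_exp_neg_mul_sq one_pos
  · simp only [(hder _).deriv, mul_pow, hsq, neg_sq]; exact h2
  · simp only [hsq]; exact h2

lemma nR_gauss : 0 < nR (fun t => Real.exp (-t^2/2)) := by
  unfold nR
  rw [integral_pos_iff_support_of_nonneg (fun t => sq_nonneg _) memB1_gauss.2.1]
  have : Function.support (fun t : ℝ => Real.exp (-t^2/2)^2) = univ := by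
    ext t; simp [(Real.exp_pos _).ne']
  rw [this]; simp

lemma En_gauss {a m α d c : ℝ} (hm : 1 < m) (hd : (1 - 1/m) * d^2 = (1 + a) * α)
    (hd0 : 0 ≤ d) (hc : c < -d) :
    En a m α c (fun t => Real.exp (-t^2/2)) < (1 - α) * nR (fun t => Real.exp (-t^2/2)) := by
  have h := memB1_gauss
  have hder : ∀ t : ℝ, deriv (fun t => Real.exp (-t^2/2)) t = -t * Real.exp (-t^2/2) := by
    intro t
    exact (hasDerivAt_gauss t).deriv
  have b1 := bdry_Ioi h c
  have b2 := bdry_Iic h c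
  rw [integral_add h.2.1.integrableOn h.int_cross.integrableOn] at b1 b2
  have hK : ∀ s : Set ℝ, KE s (fun t => Real.exp (-t^2/2)) =
      - ∫ t in s, 2 * t * Real.exp (-t^2/2) * deriv (fun t => Real.exp (-t^2/2)) t := by
    intro s
    unfold KE
    rw [← integral_neg]
    congr 1; ext t
    rw [hder]; ring
  have hlow : 2 * c^2 * (∫ t in Iic c, Real.exp (-t^2/2)^2) ≤
      KE (Iic c) (fun t => Real.exp (-t^2/2)) := by
    unfold KE
    rw [← integral_const_mul]
    refine setIntegral_mono_on (h.2.1.const_mul _).integrableOn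
      (h.2.2.1.add h.2.2.2).integrableOn measurableSet_Iic fun t ht => ?_
    rw [hder]
    have : c^2 ≤ t^2 := by
      have : t ≤ c := ht
      nlinarith
    nlinarith [mul_le_mul_of_nonneg_right this (sq_nonneg (Real.exp (-t^2/2)))]
  have p1 : 0 ≤ ∫ t in Iic c, Real.exp (-t^2/2)^2 := integral_nonneg fun _ => sq_nonneg _
  rw [En_eq h, nR_split h c]
  have hk0 : 0 < 1 - 1/m := by
    have : 1/m < 1 := by rw [div_lt_one (by linarith)]; exact hm
    linarith
  have e1 := hK (Ioi c)
  have e2 := hK (Iic c)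
  have hv : 0 < (Real.exp (-c^2/2))^2 := by positivity
  set N := ∫ t in Iic c, Real.exp (-t^2/2)^2
  set P := ∫ t in Ioi c, Real.exp (-t^2/2)^2
  set K1 := KE (Ioi c) (fun t => Real.exp (-t^2/2))
  set K2 := KE (Iic c) (fun t => Real.exp (-t^2/2))
  set w := (Real.exp (-c^2/2))^2
  have f1 : K1 = P + c * w := by linarith
  have f2 : K2 = N - c * w := by linarith
  have hcw : 0 < -c * w := mul_pos (by linarith) hv
  have key : d^2 * N < K2 := by
    rcases p1.eq_or_lt with h0 | h0
    · rw [f2, ← h0]; linarith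
    · have : d^2 < 2 * c^2 := by nlinarith
      nlinarith
  have key2 := mul_lt_mul_of_pos_left key hk0
  rw [← mul_assoc, hd] at key2
  rw [f2] at key2 ⊢
  rw [f1]
  nlinarith

lemma En_lower {v : ℝ → ℝ} (h : MemB1 v) {a m α c : ℝ} (ha : 0 < a) (hm : 1 < m) (hα : 0 < α) :
    -α * nR v ≤ En a m α c v := by
  rw [En_eq h, nR_split h c]
  have p1 : 0 ≤ ∫ t in Iic c, (v t)^2 := integral_nonneg fun _ => sq_nonneg _
  have k1 : 0 ≤ KE (Ioi c) v := integral_nonneg fun t => by positivity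
  have k2 : 0 ≤ KE (Iic c) v := integral_nonneg fun t => by positivity
  have k3 : 0 ≤ (1/m) * KE (Iic c) v := by positivity
  have : 0 ≤ a * α * ∫ t in Iic c, (v t)^2 := by positivity
  nlinarith

lemma set_nonempty (a m α ξ : ℝ) :
    {r : ℝ | ∃ u : ℝ → ℝ, MemB1 u ∧ nR u ≠ 0 ∧ r = QI a m α ξ u / nR u}.Nonempty :=
  ⟨_, _, memB1_gauss, nR_gauss.ne', rfl⟩

lemma set_bdd {a m α : ℝ} (ha : 0 < a) (hm : 1 < m) (hα : 0 < α) (ξ : ℝ) :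
    -α ∈ lowerBounds {r : ℝ | ∃ u : ℝ → ℝ, MemB1 u ∧ nR u ≠ 0 ∧ r = QI a m α ξ u / nR u} := by
  rintro r ⟨u, hu, hn, rfl⟩
  have hpos := (nR_nonneg u).lt_of_ne' hn
  rw [le_div_iff₀ hpos, QI_eq_En, ← nR_shift u ξ]
  exact En_lower (hu.shift ξ) ha hm hα

lemma mu1_le_QI {a m α : ℝ} (ha : 0 < a) (hm : 1 < m) (hα : 0 < α) (ξ : ℝ) {u : ℝ → ℝ}
    (hu : MemB1 u) (hn : nR u ≠ 0) : mu1 a m α ξ ≤ QI a m α ξ u / nR u :=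
  csInf_le ⟨_, set_bdd ha hm hα ξ⟩ ⟨u, hu, hn, rfl⟩

lemma mu1_le {a m α : ℝ} (ha : 0 < a) (hm : 1 < m) (hα : 0 < α) (ξ : ℝ) {v : ℝ → ℝ}
    (hv : MemB1 v) (hn : 0 < nR v) : mu1 a m α ξ * nR v ≤ En a m α (-ξ) v := by
  have := mu1_le_QI (u := fun s => v (s + -ξ)) ha hm hα ξ (hv.shift (-ξ))
    (by rw [nR_shift]; exact hn.ne')
  rw [nR_shift, QI_eq_En, le_div_iff₀ hn] at this
  simpa using this

lemma le_mu1 {a m α : ℝ} (ξ r : ℝ)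
    (H : ∀ v, MemB1 v → 0 < nR v → r * nR v ≤ En a m α (-ξ) v) : r ≤ mu1 a m α ξ := by
  refine le_csInf (set_nonempty a m α ξ) ?_
  rintro _ ⟨u, hu, hn, rfl⟩
  have hpos := (nR_nonneg u).lt_of_ne' hn
  rw [le_div_iff₀ hpos, QI_eq_En]
  have := H _ (hu.shift ξ) (by rwa [nR_shift])
  rwa [nR_shift] at this

lemma exists_of_mu1_lt {a m α : ℝ} (ξ r : ℝ) (hr : mu1 a m α ξ < r) :
    ∃ v, MemB1 v ∧ 0 < nR v ∧ En a m α (-ξ) v < r * nR v := by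
  by_contra! H
  exact absurd (le_mu1 ξ r H) (not_le.2 hr)

lemma QI_quad {u : ℝ → ℝ} (h : MemB1 u) (a m α : ℝ) (hm : 1 < m) :
    ∃ A B C : ℝ, C ≤ nR u ∧ ∀ ξ, QI a m α ξ u = A + B * ξ + C * ξ^2 := by
  have hk : Integrable (fun t => (deriv u t)^2 + t^2 * (u t)^2) := h.2.2.1.add h.2.2.2
  have key : ∀ s : Set ℝ, ∀ p q ξ : ℝ,
      ∫ t in s, (p * ((deriv u t)^2 + (t - ξ)^2 * (u t)^2) + q * (u t)^2) =
      p * (∫ t in s, ((deriv u t)^2 + t^2 * (u t)^2)) + (-2*p*ξ) * (∫ t in s, t * (u t)^2)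
        + (p * ξ^2 + q) * ∫ t in s, (u t)^2 := by
    intro s p q ξ
    rw [← integral_const_mul, ← integral_const_mul, ← integral_const_mul,
      ← integral_add (hk.const_mul _).integrableOn (h.int_lin.const_mul _).integrableOn,
      ← integral_add]
    · congr 1; ext t; ring
    · exact ((hk.const_mul _).add (h.int_lin.const_mul _)).integrableOn
    · exact (h.2.1.const_mul _).integrableOn
  have hQ : ∀ ξ, QI a m α ξ u =
      (∫ t in Ioi (0:ℝ), (1 * ((deriv u t)^2 + (t - ξ)^2 * (u t)^2) + (-α) * (u t)^2)) +
      ∫ t in Iic (0:ℝ), ((1/m) * ((deriv u t)^2 + (t - ξ)^2 * (u t)^2) + a * α * (u t)^2) := by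
    intro ξ
    unfold QI
    rw [integral_Iic_eq_integral_Iio]
    congr 2; ext t; ring
  refine ⟨(∫ t in Ioi (0:ℝ), ((deriv u t)^2 + t^2 * (u t)^2)) - α * (∫ t in Ioi (0:ℝ), (u t)^2)
      + (1/m) * (∫ t in Iic (0:ℝ), ((deriv u t)^2 + t^2 * (u t)^2))
      + a * α * (∫ t in Iic (0:ℝ), (u t)^2),
    -2 * (∫ t in Ioi (0:ℝ), t * (u t)^2) - 2 * (1/m) * (∫ t in Iic (0:ℝ), t * (u t)^2),
    (∫ t in Ioi (0:ℝ), (u t)^2) + (1/m) * (∫ t in Iic (0:ℝ), (u t)^2), ?_, ?_⟩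
  · rw [nR_split h 0]
    have p1 : 0 ≤ ∫ t in Iic (0:ℝ), (u t)^2 := integral_nonneg fun _ => sq_nonneg _
    have : 1/m ≤ 1 := by rw [div_le_one (by linarith)]; exact hm.le
    nlinarith
  · intro ξ
    rw [hQ, key, key]; ring

lemma mu1_continuous {a m α : ℝ} (ha : 0 < a) (hm : 1 < m) (hα : 0 < α) :
    Continuous (mu1 a m α) := by
  have hconc : ConcaveOn ℝ univ (fun ξ => mu1 a m α ξ - ξ^2) := by
    refine ⟨convex_univ, fun x _ y _ p q hp hq hpq => ?_⟩
    simp only [smul_eq_mul]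
    rw [le_sub_iff_add_le]
    refine le_csInf (set_nonempty a m α _) ?_
    rintro _ ⟨u, hu, hn, rfl⟩
    have hpos := (nR_nonneg u).lt_of_ne' hn
    have hx := mu1_le_QI ha hm hα x hu hn
    have hy := mu1_le_QI ha hm hα y hu hn
    obtain ⟨A, B, C, hC, hQ⟩ := QI_quad hu a m α hm
    rw [hQ, le_div_iff₀ hpos] at hx hy
    rw [hQ, le_div_iff₀ hpos]
    have hx' := mul_le_mul_of_nonneg_left hx hp
    have hy' := mul_le_mul_of_nonneg_left hy hq
    have hc := mul_le_mul_of_nonneg_left hC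
      (mul_nonneg (mul_nonneg hp hq) (sq_nonneg (x - y)))
    obtain rfl : q = 1 - p := by linarith
    nlinarith
  have := hconc.continuousOn isOpen_univ
  rw [continuousOn_univ] at this
  have h2 := this.add (continuous_pow 2)
  refine h2.congr fun x => ?_
  simp

/-- if `m > 1`, `ε₀ ∈ (0, aα)` and `-ε₀ ≤ inf_ξ μ₁(a,m,α;ξ) ≤ ε₀`,
then the set of minimizers of `ξ ↦ μ₁(a,m,α;ξ)` is nonempty and every minimizer
`ξ` satisfies `|ξ| ≤ √((1+a)(1-1/m)⁻¹ α)`. -/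
theorem minimizers_nonempty_and_bounded (a m α ε₀ : ℝ) (ha : 0 < a) (hm : 1 < m)
    (hα : 0 < α) (hε : ε₀ ∈ Ioo (0:ℝ) (a * α))
    (hlow : -ε₀ ≤ sInf (Set.range (mu1 a m α)))
    (hup : sInf (Set.range (mu1 a m α)) ≤ ε₀) :
    ({ξ : ℝ | ∀ ξ' : ℝ, mu1 a m α ξ ≤ mu1 a m α ξ'}.Nonempty) ∧
    ∀ ξ : ℝ, (∀ ξ' : ℝ, mu1 a m α ξ ≤ mu1 a m α ξ') →
      |ξ| ≤ Real.sqrt ((1 + a) * (1 - 1/m)⁻¹ * α) := by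
  have hk0 : 0 < 1 - 1/m := by
    have : 1/m < 1 := by rw [div_lt_one (by linarith)]; exact hm
    linarith
  set d := Real.sqrt ((1 + a) * (1 - 1/m)⁻¹ * α) with hd_def
  have hd0 : 0 ≤ d := Real.sqrt_nonneg _
  have hd : (1 - 1/m) * d^2 = (1 + a) * α := by
    rw [hd_def, Real.sq_sqrt (by positivity)]
    have hk1 := hk0.ne'
    generalize (1 - 1/m) = k at hk1
    field_simp
  have hbdd : BddBelow (Set.range (mu1 a m α)) := by
    refine ⟨-α, ?_⟩
    rintro _ ⟨ξ, rfl⟩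
    exact le_mu1 ξ (-α) fun v hv _ => En_lower hv ha hm hα
  set κ := min (1 - α) (1/m + a * α) with hκ
  have hκ1 : κ ≤ 1 - α := min_le_left _ _
  have hκ2 : κ ≤ 1/m + a * α := min_le_right _ _
  have hinf : sInf (Set.range (mu1 a m α)) < κ := by
    rw [hκ, lt_min_iff]
    constructor
    · refine (csInf_le hbdd ⟨d + 1, rfl⟩).trans_lt ?_
      have h1 := mu1_le ha hm hα (d + 1) memB1_gauss nR_gauss
      have h2 := En_gauss (a := a) (α := α) (c := -(d+1)) hm hd hd0 (by linarith)
      exact lt_of_mul_lt_mul_right (h1.trans_lt h2) nR_gauss.le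
    · have : 0 < 1/m := by positivity
      linarith [hε.2]
  have hneg : ∀ ξ ≤ 0, κ ≤ mu1 a m α ξ := by
    intro ξ hξ
    refine le_mu1 ξ κ fun v hv _ => ?_
    have := En_ge (c := -ξ) hv hm hκ1 hκ2
    have : 0 ≤ (1 - 1/m) * (-ξ * (v (-ξ))^2) :=
      mul_nonneg hk0.le (mul_nonneg (by linarith) (sq_nonneg _))
    linarith
  have hmono : ∀ ξ, d ≤ ξ → mu1 a m α d ≤ mu1 a m α ξ := by
    intro ξ hξ
    refine le_mu1 ξ _ fun v hv hn => ?_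
    have := En_mono (a := a) (α := α) (D := d) (η := 0) (c := -ξ) (c' := -d) hv hm hd
      (by linarith) le_rfl (fun t ht => by nlinarith [ht.2]) (fun t _ => sq_nonneg _)
    have := mu1_le ha hm hα d hv hn
    linarith
  have hκex : ∃ ξ, mu1 a m α ξ < κ := by
    obtain ⟨_, ⟨ξ, rfl⟩, h⟩ := exists_lt_of_csInf_lt (Set.range_nonempty _) hinf
    exact ⟨ξ, h⟩
  constructor
  · obtain ⟨ξ0, h0, hmin⟩ := isCompact_Icc.exists_isMinOn (nonempty_Icc.2 hd0)
      (mu1_continuous ha hm hα).continuousOn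
    have hpos : ∀ ξ, 0 ≤ ξ → mu1 a m α ξ0 ≤ mu1 a m α ξ := by
      intro ξ hξ
      rcases le_total ξ d with h | h
      · exact hmin ⟨hξ, h⟩
      · exact (hmin (right_mem_Icc.2 hd0)).trans (hmono ξ h)
    obtain ⟨ξ1, h1⟩ := hκex
    have h1pos : 0 ≤ ξ1 := by
      by_contra! h
      exact absurd (hneg ξ1 h.le) (not_le.2 h1)
    refine ⟨ξ0, fun ξ => ?_⟩
    rcases le_total 0 ξ with h | h
    · exact hpos ξ h
    · exact ((hpos ξ1 h1pos).trans h1.le).trans (hneg ξ h)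
  · intro ξ hξ
    obtain ⟨ξ1, h1⟩ := hκex
    have hlt : mu1 a m α ξ < κ := (hξ ξ1).trans_lt h1
    have hξ0 : 0 < ξ := by
      by_contra! h
      exact absurd (hneg ξ h) (not_le.2 hlt)
    rw [abs_of_pos hξ0]
    by_contra! hdξ
    obtain ⟨D, hD1, hD2⟩ := exists_between hdξ
    have hDd : d^2 < D^2 := by nlinarith
    set δ := κ - mu1 a m α ξ with hδ
    have hδ0 : 0 < δ := by linarith
    set β := (ξ - D) * ((D^2 - d^2) * (δ / (2 * ξ))) with hβ
    have hβ0 : 0 < β := mul_pos (by linarith) (mul_pos (by linarith) (by positivity))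
    obtain ⟨v, hv, hn, hE⟩ := exists_of_mu1_lt (a := a) (m := m) (α := α) ξ
      (mu1 a m α ξ + min (δ/2) β) (by have := lt_min (half_pos hδ0) hβ0; linarith)
    have hE1 : En a m α (-ξ) v < (mu1 a m α ξ + δ/2) * nR v :=
      hE.trans_le (mul_le_mul_of_nonneg_right (by linarith [min_le_left (δ/2) β]) hn.le)
    have hE2 : En a m α (-ξ) v < (mu1 a m α ξ + β) * nR v :=
      hE.trans_le (mul_le_mul_of_nonneg_right (by linarith [min_le_right (δ/2) β]) hn.le)
    have hpt : ∀ t ∈ Ioc (-ξ) (-D), δ * nR v / (2 * ξ * (1 - 1/m)) ≤ (v t)^2 := by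
      intro t ht
      have m1 := En_mono (a := a) (α := α) (D := D) (η := 0) (c := -ξ) (c' := t) hv hm hd
        ht.1.le hDd.le (fun s hs => by nlinarith [hs.2, ht.2]) (fun t _ => sq_nonneg _)
      have m2 := En_ge (c := t) hv hm hκ1 hκ2
      rw [div_le_iff₀ (by positivity)]
      have m3 : -t * (v t)^2 ≤ ξ * (v t)^2 :=
        mul_le_mul_of_nonneg_right (by linarith [ht.1]) (sq_nonneg _)
      have m4 := mul_le_mul_of_nonneg_left m3 hk0.le
      have m5 : δ * nR v = κ * nR v - mu1 a m α ξ * nR v := by rw [hδ]; ring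
      nlinarith
    have m1 := En_mono (a := a) (α := α) (D := D) (c := -ξ) (c' := -D) hv hm hd
      (by linarith) hDd.le (fun s hs => by nlinarith [hs.2]) hpt
    have m2 := mu1_le ha hm hα D hv hn
    have m3 := mul_le_mul_of_nonneg_right (hξ D) hn.le
    have m4 : (-D - -ξ) * ((1 - 1/m) * (D^2 - d^2) * (δ * nR v / (2 * ξ * (1 - 1/m))))
        = β * nR v := by
      rw [hβ]
      have hk1 := hk0.ne'
      generalize (1 - 1/m) = k at hk1
      field_simp
      ring
    linarith
end
end

section
/- Let a > 0, m > 1, α > 0, and let ξ ∈ M(a,m,α) be a minimizer of ξ ↦ μ₁(a,m,α;ξ). Then the effective de Gennes parameter γ(a,m,α;ξ) = f'(0₊)/f(0) (with f the normalized positive ground state) satisfies γ(a,m,α;ξ)² = ((a+1)/(m-1))α - (1/m)ξ². In particular, if moreover inf_ξ μ₁(a,m,α;ξ) < aα, then γ(a,m,α;ξ) > 0. -/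
open MeasureTheory Set Filter Topology

noncomputable section

/-- weight lemma -/
lemma aux_integrable_sq_shift {μ : Measure ℝ} {u : ℝ → ℝ} (ξ : ℝ)
    (h0 : Integrable (fun t => (u t)^2) μ) (h2 : Integrable (fun t => t^2 * (u t)^2) μ) :
    Integrable (fun t => (t - ξ)^2 * (u t)^2) μ := by
  refine Integrable.mono' ((h2.const_mul 2).add (h0.const_mul (2*ξ^2))) ?_ ?_
  · exact (by fun_prop : Continuous fun t : ℝ => (t - ξ)^2).aestronglyMeasurable.mul
      h0.aestronglyMeasurable
  · refine Eventually.of_forall fun t => ?_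
    rw [Real.norm_of_nonneg (by positivity)]
    simp only [Pi.add_apply]
    nlinarith [mul_nonneg (sq_nonneg (t + ξ)) (sq_nonneg (u t))]

lemma aux_integrable_lin {μ : Measure ℝ} {u : ℝ → ℝ} (ξ : ℝ)
    (h0 : Integrable (fun t => (u t)^2) μ) (h2 : Integrable (fun t => t^2 * (u t)^2) μ) :
    Integrable (fun t => 2 * (t - ξ) * (u t)^2) μ := by
  refine Integrable.mono' ((aux_integrable_sq_shift ξ h0 h2).add h0) ?_ ?_
  · exact (by fun_prop : Continuous fun t : ℝ => 2 * (t - ξ)).aestronglyMeasurable.mul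
      h0.aestronglyMeasurable
  · refine Eventually.of_forall fun t => ?_
    rw [Real.norm_eq_abs]
    simp only [Pi.add_apply]
    rw [abs_le]
    constructor
    · nlinarith [mul_nonneg (sq_nonneg (t - ξ + 1)) (sq_nonneg (u t))]
    · nlinarith [mul_nonneg (sq_nonneg (t - ξ - 1)) (sq_nonneg (u t))]

lemma aux_half (ξ c : ℝ) (f g : ℝ → ℝ)
    (hfc : ContinuousOn f (Ici 0)) (hgc : ContinuousOn g (Ici 0))
    (hf : ∀ t : ℝ, 0 < t → HasDerivAt f (g t) t)
    (hg : ∀ t : ℝ, 0 < t → HasDerivAt g (((t - ξ)^2 + c) * f t) t)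
    (hpos : ∀ t : ℝ, 0 < f t) (hL : IntegrableOn (fun t => (f t)^2) (Ioi 0)) :
    IntegrableOn (fun t => (g t)^2) (Ioi 0) ∧
    IntegrableOn (fun t => t^2 * (f t)^2) (Ioi 0) ∧
    (∫ t in Ioi (0:ℝ), ((g t)^2 + ((t - ξ)^2 + c) * (f t)^2)) = - (f 0 * g 0) ∧
    (∫ t in Ioi (0:ℝ), 2 * (t - ξ) * (f t)^2) = (g 0)^2 - (ξ^2 + c) * (f 0)^2 := by
  obtain ⟨T, hT0, hT⟩ : ∃ T : ℝ, 0 < T ∧ ∀ t, T ≤ t → t^2/4 ≤ (t - ξ)^2 + c := by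
    refine ⟨2*|ξ|+2*|c|+2, by positivity, fun t ht => ?_⟩
    have h1 : t / 2 + (1 + |c|) ≤ t - ξ := by linarith [le_abs_self ξ]
    have h3 : 0 ≤ t := by linarith [abs_nonneg ξ, abs_nonneg c]
    have h2 : (t / 2 + (1 + |c|))^2 ≤ (t - ξ)^2 :=
      pow_le_pow_left₀ (by positivity) h1 2
    nlinarith [abs_nonneg c, neg_abs_le c, mul_nonneg h3 (abs_nonneg c)]
  have hposT : ∀ t, T ≤ t → 0 < t := fun t ht => lt_of_lt_of_le hT0 ht
  -- g monotone on [T, ∞)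
  have gmono : MonotoneOn g (Ici T) := by
    refine monotoneOn_of_deriv_nonneg (convex_Ici T)
      (hgc.mono (Ici_subset_Ici.2 hT0.le)) ?_ ?_
    · intro t ht
      rw [interior_Ici] at ht
      exact (hg t (hposT t (le_of_lt ht))).differentiableAt.differentiableWithinAt
    · intro t ht
      rw [interior_Ici] at ht
      rw [(hg t (hposT t (le_of_lt ht))).deriv]
      exact mul_nonneg (le_trans (by positivity) (hT t (le_of_lt ht))) (hpos t).le
  have gnonpos : ∀ t, T ≤ t → g t ≤ 0 := by
    intro t1 ht1
    by_contra! hcon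
    have fmono : MonotoneOn f (Ici t1) := by
      refine monotoneOn_of_deriv_nonneg (convex_Ici t1)
        (hfc.mono (Ici_subset_Ici.2 (hposT t1 ht1).le)) ?_ ?_
      · intro t ht
        rw [interior_Ici] at ht
        exact (hf t (hposT t (ht1.trans ht.le))).differentiableAt.differentiableWithinAt
      · intro t ht
        rw [interior_Ici] at ht
        rw [(hf t (hposT t (ht1.trans ht.le))).deriv]
        exact hcon.le.trans (gmono ht1 (ht1.trans ht.le) ht.le)
    have h1 : IntegrableOn (fun _ : ℝ => (f t1)^2) (Ioi t1) := by
      refine Integrable.mono' (hL.mono_set (Ioi_subset_Ioi (hposT t1 ht1).le))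
        aestronglyMeasurable_const ?_
      refine (ae_restrict_iff' measurableSet_Ioi).2 (Eventually.of_forall fun t ht => ?_)
      rw [Real.norm_of_nonneg (by positivity)]
      exact pow_le_pow_left₀ (hpos t1).le (fmono self_mem_Ici (mem_Ici.2 (le_of_lt ht)) (le_of_lt ht)) 2
    rw [integrableOn_const_iff] at h1
    have := hpos t1
    rcases h1 with h1 | h1
    · simp at h1; linarith
    · simp at h1
  -- derivative of f g
  have hfg : ∀ t, 0 < t → HasDerivAt (fun t => f t * g t)
      ((g t)^2 + ((t - ξ)^2 + c) * (f t)^2) t := by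
    intro t ht
    exact ((hf t ht).fun_mul (hg t ht)).congr_deriv (by ring)
  have fgc : ContinuousOn (fun t => f t * g t) (Ici 0) := hfc.mul hgc
  have fgmono : MonotoneOn (fun t => f t * g t) (Ici T) := by
    refine monotoneOn_of_deriv_nonneg (convex_Ici T)
      (fgc.mono (Ici_subset_Ici.2 hT0.le)) ?_ ?_
    · intro t ht
      rw [interior_Ici] at ht
      exact (hfg t (hposT t (le_of_lt ht))).differentiableAt.differentiableWithinAt
    · intro t ht
      rw [interior_Ici] at ht
      rw [(hfg t (hposT t (le_of_lt ht))).deriv]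
      have := le_trans (by positivity) (hT t (le_of_lt ht))
      positivity
  have hlim : ∃ l, Tendsto (fun t => f t * g t) atTop (𝓝 l) := by
    have hm : Monotone (fun t => f (max t T) * g (max t T)) := by
      intro x y hxy
      exact fgmono (le_max_right x T) (le_max_right y T) (max_le_max_right T hxy)
    have hb : BddAbove (range (fun t => f (max t T) * g (max t T))) := by
      refine ⟨0, ?_⟩
      rintro _ ⟨x, rfl⟩
      exact mul_nonpos_of_nonneg_of_nonpos (hpos _).le (gnonpos _ (le_max_right _ _))
    refine ⟨_, (tendsto_atTop_ciSup hm hb).congr' ?_⟩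
    filter_upwards [eventually_ge_atTop T] with t ht
    rw [max_eq_left ht]
  obtain ⟨l, hl⟩ := hlim
  have hintT : IntegrableOn (fun t => (g t)^2 + ((t - ξ)^2 + c) * (f t)^2) (Ioi T) := by
    refine integrableOn_Ioi_deriv_of_nonneg' (g := fun t => f t * g t)
      (fun x hx => hfg x (hposT x hx)) ?_ hl
    intro x hx
    have := le_trans (by positivity) (hT x (le_of_lt hx))
    positivity
  have hsplit : Ioi (0:ℝ) = Ioc 0 T ∪ Ioi T := (Ioc_union_Ioi_eq_Ioi hT0.le).symm
  have hloc : ∀ h : ℝ → ℝ, ContinuousOn h (Ici 0) → IntegrableOn h (Ioi T) →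
      IntegrableOn h (Ioi 0) := by
    intro h hc hi
    rw [hsplit]
    refine IntegrableOn.union ?_ hi
    exact ((hc.mono Icc_subset_Ici_self).integrableOn_Icc).mono_set Ioc_subset_Icc_self
  have hg2 : IntegrableOn (fun t => (g t)^2) (Ioi 0) := by
    refine hloc _ (hgc.pow 2) (Integrable.mono' hintT ?_ ?_)
    · exact ((hgc.pow 2).mono (Ioi_subset_Ici hT0.le)).aestronglyMeasurable measurableSet_Ioi
    · refine (ae_restrict_iff' measurableSet_Ioi).2 (Eventually.of_forall fun t ht => ?_)
      rw [Real.norm_of_nonneg (by positivity)]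
      have := le_trans (by positivity) (hT t (le_of_lt ht))
      have : 0 ≤ ((t - ξ)^2 + c) * (f t)^2 := by positivity
      linarith
  have ht2c : ContinuousOn (fun t => t^2 * (f t)^2) (Ici 0) :=
    (continuous_pow 2).continuousOn.mul (hfc.pow 2)
  have ht2 : IntegrableOn (fun t => t^2 * (f t)^2) (Ioi 0) := by
    refine hloc _ ht2c (Integrable.mono' (hintT.const_mul 4) ?_ ?_)
    · exact (ht2c.mono (Ioi_subset_Ici hT0.le)).aestronglyMeasurable measurableSet_Ioi
    · refine (ae_restrict_iff' measurableSet_Ioi).2 (Eventually.of_forall fun t ht => ?_)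
      rw [Real.norm_of_nonneg (by positivity)]
      have := mul_le_mul_of_nonneg_right (hT t (le_of_lt ht)) (sq_nonneg (f t))
      nlinarith [sq_nonneg (g t)]
  have hV : IntegrableOn (fun t => ((t - ξ)^2 + c) * (f t)^2) (Ioi 0) := by
    have := (aux_integrable_sq_shift ξ hL ht2).add (hL.const_mul c)
    refine this.congr (Eventually.of_forall fun t => ?_)
    simp only [Pi.add_apply]; ring
  have hfgi : IntegrableOn (fun t => f t * g t) (Ioi 0) := by
    refine Integrable.mono' (hL.add hg2) ?_ ?_
    · exact (fgc.mono (Ioi_subset_Ici le_rfl)).aestronglyMeasurable measurableSet_Ioi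
    · refine Eventually.of_forall fun t => ?_
      simp only [Pi.add_apply]
      rw [Real.norm_eq_abs, abs_le]
      constructor <;> nlinarith [sq_nonneg (f t + g t), sq_nonneg (f t - g t)]
  refine ⟨hg2, ht2, ?_, ?_⟩
  · have hi := hg2.add hV
    have h0 := tendsto_zero_of_hasDerivAt_of_integrableOn_Ioi (a := 0)
      (f := fun t => f t * g t) (f' := fun t => (g t)^2 + ((t - ξ)^2 + c) * (f t)^2)
      (fun x hx => hfg x hx) hi hfgi
    rw [integral_Ioi_of_hasDerivAt_of_tendsto (f := fun t => f t * g t)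
      (fgc 0 self_mem_Ici) (fun x hx => hfg x hx) hi h0]
    ring
  · have hE : ∀ t, 0 < t → HasDerivAt (fun t => ((t - ξ)^2 + c) * (f t)^2 - (g t)^2)
        (2 * (t - ξ) * (f t)^2) t := by
      intro t ht
      have h1 : HasDerivAt (fun t : ℝ => (t - ξ)^2 + c) (2 * (t - ξ)) t := by
        simpa using (((hasDerivAt_id t).sub_const ξ).pow 2).add_const c
      exact ((h1.fun_mul ((hf t ht).fun_pow 2)).fun_sub ((hg t ht).fun_pow 2)).congr_deriv
        (by push_cast; ring)
    have hi := aux_integrable_lin ξ hL ht2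
    have hEi := hV.sub hg2
    have h0 := tendsto_zero_of_hasDerivAt_of_integrableOn_Ioi (a := 0)
      (fun x hx => hE x hx) hi hEi
    have hEc : ContinuousOn (fun t => ((t - ξ)^2 + c) * (f t)^2 - (g t)^2) (Ici 0) :=
      ((by fun_prop : Continuous fun t : ℝ => (t - ξ)^2 + c).continuousOn.mul (hfc.pow 2)).sub
        (hgc.pow 2)
    rw [integral_Ioi_of_hasDerivAt_of_tendsto
      (hEc 0 self_mem_Ici) (fun x hx => hE x hx) hi h0]
    ring

lemma aux_half' (ξ c d : ℝ) (f g : ℝ → ℝ)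
    (hfc : Continuous f) (hd : Tendsto g (𝓝[>] (0:ℝ)) (𝓝 d))
    (hf : ∀ t : ℝ, 0 < t → HasDerivAt f (g t) t)
    (hg : ∀ t : ℝ, 0 < t → HasDerivAt g (((t - ξ)^2 + c) * f t) t)
    (hpos : ∀ t : ℝ, 0 < f t) (hL : IntegrableOn (fun t => (f t)^2) (Ioi 0)) :
    IntegrableOn (fun t => (g t)^2) (Ioi 0) ∧
    IntegrableOn (fun t => t^2 * (f t)^2) (Ioi 0) ∧
    (∫ t in Ioi (0:ℝ), ((g t)^2 + ((t - ξ)^2 + c) * (f t)^2)) = - (f 0 * d) ∧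
    (∫ t in Ioi (0:ℝ), 2 * (t - ξ) * (f t)^2) = d^2 - (ξ^2 + c) * (f 0)^2 := by
  set G := Function.update g 0 d with hG
  have hGe : ∀ t, 0 < t → G t = g t := fun t ht => Function.update_of_ne ht.ne' _ _
  have hG0 : G 0 = d := Function.update_self _ _ _
  have hGev : ∀ t, 0 < t → G =ᶠ[𝓝 t] g := by
    intro t ht
    filter_upwards [Ioi_mem_nhds ht] with s hs using hGe s hs
  have hGc : ContinuousOn G (Ici 0) := by
    intro t ht
    rcases (mem_Ici.1 ht).eq_or_lt with h | h
    · subst h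
      rw [hG, continuousWithinAt_update_same]
      simpa using hd
    · exact ((hg t h).congr_of_eventuallyEq (hGev t h)).continuousAt.continuousWithinAt
  obtain ⟨h1, h2, h3, h4⟩ := aux_half ξ c f G hfc.continuousOn hGc
    (fun t ht => by rw [hGe t ht]; exact hf t ht)
    (fun t ht => (hg t ht).congr_of_eventuallyEq (hGev t ht)) hpos hL
  rw [hG0] at h3 h4
  refine ⟨?_, h2, ?_, h4⟩
  · exact h1.congr_fun (fun t ht => by simp only [hGe t ht]) measurableSet_Ioi
  · rw [← h3]
    exact setIntegral_congr_fun measurableSet_Ioi (fun t ht => by simp only [hGe t ht])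

/-- The interface form split into pieces, with an independent derivative slot. -/
def auxFF (a m α ξ : ℝ) (u v : ℝ → ℝ) : ℝ :=
  ((∫ t in Ioi (0:ℝ), (v t)^2) + (∫ t in Ioi (0:ℝ), (t - ξ)^2 * (u t)^2)
    - α * ∫ t in Ioi (0:ℝ), (u t)^2) +
  ((1/m) * ((∫ t in Iio (0:ℝ), (v t)^2) + ∫ t in Iio (0:ℝ), (t - ξ)^2 * (u t)^2)
    + a * α * ∫ t in Iio (0:ℝ), (u t)^2)

lemma aux_QI_split (a m α ξ : ℝ) (u : ℝ → ℝ) (hu : MemB1 u) :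
    QI a m α ξ u = auxFF a m α ξ u (deriv u) := by
  obtain ⟨-, h0, h1, h2⟩ := hu
  have hs := aux_integrable_sq_shift ξ h0 h2
  have hadd : Integrable (fun t => (deriv u t)^2 + (t - ξ)^2 * (u t)^2) := h1.add hs
  unfold QI auxFF
  congr 1
  · rw [integral_sub hadd.integrableOn (h0.const_mul α).integrableOn,
      integral_add h1.integrableOn hs.integrableOn, integral_const_mul]
  · rw [integral_add (hadd.const_mul (1/m)).integrableOn
      (h0.const_mul (a*α)).integrableOn, integral_const_mul,
      integral_add h1.integrableOn hs.integrableOn, integral_const_mul]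

lemma aux_split_line (h : ℝ → ℝ) (hi : Integrable h) :
    ∫ t, h t = (∫ t in Ioi (0:ℝ), h t) + ∫ t in Iio (0:ℝ), h t := by
  rw [← integral_add_compl (measurableSet_Ioi (a := (0:ℝ))) hi, compl_Ioi, integral_Iic_eq_integral_Iio]

lemma aux_QI_lower (a m α ξ : ℝ) (ha : 0 < a) (hm : 1 < m) (hα : 0 < α)
    (u : ℝ → ℝ) (hu : MemB1 u) : -α * nR u ≤ QI a m α ξ u := by
  rw [aux_QI_split a m α ξ u hu, nR, aux_split_line _ hu.2.1]
  unfold auxFF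
  have p1 : 0 ≤ ∫ t in Ioi (0:ℝ), (deriv u t)^2 := integral_nonneg fun t => sq_nonneg _
  have p2 : 0 ≤ ∫ t in Ioi (0:ℝ), (t - ξ)^2 * (u t)^2 := integral_nonneg fun t => by positivity
  have p3 : 0 ≤ ∫ t in Iio (0:ℝ), (deriv u t)^2 := integral_nonneg fun t => sq_nonneg _
  have p4 : 0 ≤ ∫ t in Iio (0:ℝ), (t - ξ)^2 * (u t)^2 := integral_nonneg fun t => by positivity
  have p5 : 0 ≤ ∫ t in Iio (0:ℝ), (u t)^2 := integral_nonneg fun t => sq_nonneg _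
  have p6 : 0 ≤ (1/m) * ((∫ t in Iio (0:ℝ), (deriv u t)^2)
      + ∫ t in Iio (0:ℝ), (t - ξ)^2 * (u t)^2) := by positivity
  have p7 : 0 ≤ a * α * ∫ t in Iio (0:ℝ), (u t)^2 := by positivity
  have p8 : 0 ≤ α * ∫ t in Iio (0:ℝ), (u t)^2 := by positivity
  linarith

lemma aux_mu1_le (a m α ξ : ℝ) (ha : 0 < a) (hm : 1 < m) (hα : 0 < α)
    (u : ℝ → ℝ) (hu : MemB1 u) : mu1 a m α ξ * nR u ≤ QI a m α ξ u := by
  have hn0 : ∀ v : ℝ → ℝ, 0 ≤ nR v := fun v => integral_nonneg fun t => sq_nonneg _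
  by_cases hn : nR u = 0
  · have := aux_QI_lower a m α ξ ha hm hα u hu
    rw [hn] at this ⊢
    linarith
  · have hpos : 0 < nR u := lt_of_le_of_ne (hn0 u) (Ne.symm hn)
    rw [← le_div_iff₀ hpos]
    refine csInf_le ⟨-α, ?_⟩ ⟨u, hu, hn, rfl⟩
    rintro r ⟨v, hv, hvn, rfl⟩
    rw [le_div_iff₀ (lt_of_le_of_ne (hn0 v) (Ne.symm hvn))]
    exact aux_QI_lower a m α ξ ha hm hα v hv

lemma aux_conv (ν : Measure ℝ) (hν : ν ≤ volume) (c : ℝ) (p h : ℝ → ℝ) (φ : ℕ → ℝ → ℝ)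
    (hp : Continuous p) (hp0 : ∀ t, 0 ≤ p t) (hh : AEStronglyMeasurable h ν)
    (hi : Integrable (fun t => p t * (h t)^2) ν)
    (hφm : ∀ n, AEStronglyMeasurable (φ n) ν)
    (hφb : ∀ n t, (φ n t)^2 ≤ (Icc (-1:ℝ) 1).indicator (fun _ => (1:ℝ)) t)
    (hφ : ∀ t, t ≠ 0 → Tendsto (fun n => φ n t) atTop (𝓝 0)) :
    (∀ n, Integrable (fun t => p t * (h t + c * φ n t)^2) ν) ∧
    Tendsto (fun n => ∫ t, p t * (h t + c * φ n t)^2 ∂ν) atTop (𝓝 (∫ t, p t * (h t)^2 ∂ν)) := by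
  set B : ℝ → ℝ := fun t => 2 * (p t * (h t)^2) + (2 * c^2) * (Icc (-1:ℝ) 1).indicator p t with hB
  have hBi : Integrable B ν := by
    refine (hi.const_mul 2).add (Integrable.const_mul ?_ _)
    refine Integrable.mono_measure ?_ hν
    rw [integrable_indicator_iff measurableSet_Icc]
    exact hp.continuousOn.integrableOn_Icc
  have hmeas : ∀ n, AEStronglyMeasurable (fun t => p t * (h t + c * φ n t)^2) ν := fun n =>
    hp.aestronglyMeasurable.mul ((hh.add ((hφm n).const_mul c)).pow 2)
  have hbd : ∀ n t, ‖p t * (h t + c * φ n t)^2‖ ≤ B t := by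
    intro n t
    have h0 := hp0 t
    rw [Real.norm_of_nonneg (by positivity), hB]
    have h1 : (Icc (-1:ℝ) 1).indicator p t = p t * (Icc (-1:ℝ) 1).indicator (fun _ => (1:ℝ)) t := by
      by_cases ht : t ∈ Icc (-1:ℝ) 1 <;> simp [ht]
    simp only [h1]
    have h2 := mul_le_mul_of_nonneg_left (hφb n t) (mul_nonneg h0 (sq_nonneg c))
    nlinarith [mul_nonneg h0 (sq_nonneg (h t - c * φ n t))]
  refine ⟨fun n => hBi.mono' (hmeas n) (Eventually.of_forall (hbd n)), ?_⟩
  refine tendsto_integral_of_dominated_convergence B hmeas hBi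
    (fun n => Eventually.of_forall (hbd n)) ?_
  have hae : ∀ᵐ t ∂ν, t ≠ 0 :=
    ae_mono hν (Measure.ae_ne volume 0)
  filter_upwards [hae] with t ht
  have := (((hφ t ht).const_mul c).const_add (h t)).pow 2 |>.const_mul (p t)
  simpa using this

/-- The scale `1/(n+1)`. -/
def auxEps (n : ℕ) : ℝ := 1 / ((n:ℝ) + 1)

lemma auxEps_pos (n : ℕ) : 0 < auxEps n := by unfold auxEps; positivity

lemma auxEps_le (n : ℕ) : auxEps n ≤ 1 := by
  unfold auxEps
  rw [div_le_one (by positivity)]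
  have : (0:ℝ) ≤ n := Nat.cast_nonneg n
  linarith

/-- Kink corrector. -/
def auxEta (n : ℕ) (t : ℝ) : ℝ := (max (auxEps n - |t|) 0)^2 / (2 * auxEps n)

/-- Derivative of the kink corrector away from zero. -/
def auxEtaD (n : ℕ) (t : ℝ) : ℝ :=
  if 0 < t then -(max (auxEps n - |t|) 0 / auxEps n) else max (auxEps n - |t|) 0 / auxEps n

lemma aux_hat_le (n : ℕ) (t : ℝ) :
    0 ≤ max (auxEps n - |t|) 0 / auxEps n ∧
    (max (auxEps n - |t|) 0 / auxEps n)^2 ≤ (Icc (-1:ℝ) 1).indicator (fun _ => (1:ℝ)) t := by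
  have he := auxEps_pos n
  have he1 := auxEps_le n
  have h0 : 0 ≤ max (auxEps n - |t|) 0 / auxEps n := by positivity
  refine ⟨h0, ?_⟩
  by_cases ht : t ∈ Icc (-1:ℝ) 1
  · simp only [ht, indicator_of_mem]
    refine pow_le_one₀ h0 ?_
    rw [div_le_one he]
    exact max_le (by linarith [abs_nonneg t]) he.le
  · have h1 : 1 < |t| := by
      by_contra! hc
      exact ht (abs_le.1 hc)
    rw [max_eq_right (by linarith)]
    simp [ht]

lemma auxEtaD_sq (n : ℕ) (t : ℝ) :
    (auxEtaD n t)^2 ≤ (Icc (-1:ℝ) 1).indicator (fun _ => (1:ℝ)) t := by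
  unfold auxEtaD
  split_ifs
  · rw [neg_sq]; exact (aux_hat_le n t).2
  · exact (aux_hat_le n t).2

lemma auxEta_sq (n : ℕ) (t : ℝ) :
    (auxEta n t)^2 ≤ (Icc (-1:ℝ) 1).indicator (fun _ => (1:ℝ)) t := by
  obtain ⟨h0, h1⟩ := aux_hat_le n t
  have he := auxEps_pos n
  have he1 := auxEps_le n
  refine le_trans ?_ h1
  have h2 : auxEta n t = (max (auxEps n - |t|) 0 / auxEps n) * (max (auxEps n - |t|) 0 / 2) := by
    unfold auxEta; field_simp
  have h3 : max (auxEps n - |t|) 0 ≤ 1 := max_le (by linarith [abs_nonneg t]) zero_le_one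
  have h4 : 0 ≤ max (auxEps n - |t|) 0 := le_max_right _ _
  rw [h2]
  refine pow_le_pow_left₀ (by positivity) ?_ 2
  exact mul_le_of_le_one_right h0 (by linarith)

lemma aux_eps_ev (t : ℝ) (ht : t ≠ 0) : ∀ᶠ n in atTop, max (auxEps n - |t|) 0 = 0 := by
  have h : Tendsto auxEps atTop (𝓝 0) := tendsto_one_div_add_atTop_nhds_zero_nat
  filter_upwards [h.eventually_lt_const (abs_pos.2 ht)] with n hn
  exact max_eq_right (by linarith)

lemma auxEta_tendsto (t : ℝ) (ht : t ≠ 0) : Tendsto (fun n => auxEta n t) atTop (𝓝 0) := by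
  refine tendsto_const_nhds.congr' ?_
  filter_upwards [aux_eps_ev t ht] with n hn
  simp [auxEta, hn]

lemma auxEtaD_tendsto (t : ℝ) (ht : t ≠ 0) : Tendsto (fun n => auxEtaD n t) atTop (𝓝 0) := by
  refine tendsto_const_nhds.congr' ?_
  filter_upwards [aux_eps_ev t ht] with n hn
  simp [auxEtaD, hn]

lemma auxEta_meas (n : ℕ) : Measurable (auxEta n) := by
  unfold auxEta; fun_prop

lemma auxEtaD_meas (n : ℕ) : Measurable (auxEtaD n) := by
  unfold auxEtaD
  refine Measurable.ite measurableSet_Ioi ?_ ?_ <;> fun_prop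

lemma aux_max_sq_deriv (x : ℝ) : HasDerivAt (fun y : ℝ => (max y 0)^2) (2 * max x 0) x := by
  rcases lt_trichotomy x 0 with h | h | h
  · rw [max_eq_right h.le, mul_zero]
    refine (hasDerivAt_const x (0:ℝ)).congr_of_eventuallyEq ?_
    filter_upwards [Iio_mem_nhds h] with y hy
    rw [max_eq_right (le_of_lt hy)]; simp
  · subst h
    rw [max_self, mul_zero]
    rw [hasDerivAt_iff_isLittleO]
    simp only [max_self, sub_zero, smul_zero]
    have h2 : (fun x : ℝ => x^2) =o[𝓝 0] fun x : ℝ => x := by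
      simpa using Asymptotics.isLittleO_pow_pow (𝕜 := ℝ) (m := 1) (n := 2) (by norm_num)
    refine Asymptotics.IsBigO.trans_isLittleO ?_ h2
    refine Asymptotics.IsBigO.of_bound 1 (Eventually.of_forall fun y => ?_)
    rcases le_total y 0 with hy | hy
    · rw [max_eq_right hy]; simp; positivity
    · rw [max_eq_left hy]; simp
  · rw [max_eq_left h.le]
    have : HasDerivAt (fun y : ℝ => y^2) (2 * x) x := by simpa using hasDerivAt_pow 2 x
    refine this.congr_of_eventuallyEq ?_
    filter_upwards [Ioi_mem_nhds h] with y hy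
    rw [max_eq_left (le_of_lt hy)]

lemma aux_etaR (n : ℕ) (t : ℝ) : HasDerivAt (fun s : ℝ => (max (auxEps n - s) 0)^2 / (2 * auxEps n))
    (-(max (auxEps n - t) 0 / auxEps n)) t := by
  have he := auxEps_pos n
  have h1 : HasDerivAt (fun s : ℝ => auxEps n - s) (-1) t := by
    simpa using (hasDerivAt_id t).const_sub (auxEps n)
  refine (((aux_max_sq_deriv (auxEps n - t)).comp t h1).div_const (2 * auxEps n)).congr_deriv ?_
  field_simp

lemma aux_etaL (n : ℕ) (t : ℝ) : HasDerivAt (fun s : ℝ => (max (auxEps n + s) 0)^2 / (2 * auxEps n))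
    (max (auxEps n + t) 0 / auxEps n) t := by
  have he := auxEps_pos n
  have h1 : HasDerivAt (fun s : ℝ => auxEps n + s) 1 t := by
    simpa using (hasDerivAt_id t).const_add (auxEps n)
  refine (((aux_max_sq_deriv (auxEps n + t)).comp t h1).div_const (2 * auxEps n)).congr_deriv ?_
  field_simp

lemma auxEta_deriv (n : ℕ) (t : ℝ) (ht : t ≠ 0) : HasDerivAt (auxEta n) (auxEtaD n t) t := by
  rcases lt_or_gt_of_ne ht with h | h
  · have := aux_etaL n t
    have e : auxEtaD n t = max (auxEps n + t) 0 / auxEps n := by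
      unfold auxEtaD
      rw [if_neg (not_lt.2 h.le), abs_of_neg h, sub_neg_eq_add]
    rw [e]
    refine this.congr_of_eventuallyEq ?_
    filter_upwards [Iio_mem_nhds h] with s hs
    unfold auxEta
    rw [abs_of_neg hs, sub_neg_eq_add]
  · have := aux_etaR n t
    have e : auxEtaD n t = -(max (auxEps n - t) 0 / auxEps n) := by
      unfold auxEtaD
      rw [if_pos h, abs_of_pos h]
    rw [e]
    refine this.congr_of_eventuallyEq ?_
    filter_upwards [Ioi_mem_nhds h] with s hs
    unfold auxEta
    rw [abs_of_pos hs]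

lemma auxEta_right (n : ℕ) : HasDerivWithinAt (auxEta n) (-1) (Ici 0) 0 := by
  have he := auxEps_pos n
  have h := (aux_etaR n 0).hasDerivWithinAt (s := Ici 0)
  rw [sub_zero, max_eq_left he.le, div_self he.ne'] at h
  refine h.congr (fun s hs => ?_) ?_
  · unfold auxEta; rw [abs_of_nonneg hs]
  · unfold auxEta; rw [abs_zero]

lemma auxEta_left (n : ℕ) : HasDerivWithinAt (auxEta n) 1 (Iic 0) 0 := by
  have he := auxEps_pos n
  have h := (aux_etaL n 0).hasDerivWithinAt (s := Iic 0)
  rw [add_zero, max_eq_left he.le, div_self he.ne'] at h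
  refine h.congr (fun s hs => ?_) ?_
  · unfold auxEta; rw [abs_of_nonpos hs, sub_neg_eq_add]
  · unfold auxEta; rw [abs_zero, sub_zero, add_zero]

/-- Trial-state inequality for functions with a kink at zero. -/
lemma aux_trial (a m α ξ dplus dminus : ℝ) (f g : ℝ → ℝ)
    (ha : 0 < a) (hm : 1 < m) (hα : 0 < α)
    (hfc : Continuous f)
    (hfg : ∀ t : ℝ, t ≠ 0 → HasDerivAt f (g t) t)
    (hdp : Tendsto g (𝓝[>] (0:ℝ)) (𝓝 dplus))
    (hdm : Tendsto g (𝓝[<] (0:ℝ)) (𝓝 dminus))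
    (h0 : Integrable (fun t => (f t)^2)) (h1 : Integrable (fun t => (g t)^2))
    (h2 : Integrable (fun t => t^2 * (f t)^2)) :
    mu1 a m α ξ * nR f ≤ auxFF a m α ξ f g := by
  set c := (dplus - dminus) / 2 with hc
  have hne : ∀ᵐ t : ℝ, t ≠ 0 := Measure.ae_ne volume 0
  have hgm : AEStronglyMeasurable g := by
    refine (measurable_deriv f).aestronglyMeasurable.congr ?_
    filter_upwards [hne] with t ht using (hfg t ht).deriv
  have hfm : AEStronglyMeasurable f := hfc.aestronglyMeasurable
  -- one-sided derivatives of f at zero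
  have hfR : HasDerivWithinAt f dplus (Ici 0) 0 := by
    refine hasDerivWithinAt_Ici_of_tendsto_deriv (s := Ioi 0) ?_ hfc.continuousWithinAt
      self_mem_nhdsWithin ?_
    · exact fun t ht => (hfg t (ne_of_gt ht)).differentiableAt.differentiableWithinAt
    · refine hdp.congr' ?_
      filter_upwards [self_mem_nhdsWithin] with t ht using ((hfg t (ne_of_gt ht)).deriv).symm
  have hfL : HasDerivWithinAt f dminus (Iic 0) 0 := by
    refine hasDerivWithinAt_Iic_of_tendsto_deriv (s := Iio 0) ?_ hfc.continuousWithinAt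
      self_mem_nhdsWithin ?_
    · exact fun t ht => (hfg t (ne_of_lt ht)).differentiableAt.differentiableWithinAt
    · refine hdm.congr' ?_
      filter_upwards [self_mem_nhdsWithin] with t ht using ((hfg t (ne_of_lt ht)).deriv).symm
  set u : ℕ → ℝ → ℝ := fun n t => f t + c * auxEta n t with hu
  set v : ℕ → ℝ → ℝ := fun n t => g t + c * auxEtaD n t with hv
  have hud : ∀ n t, t ≠ 0 → HasDerivAt (u n) (v n t) t := fun n t ht =>
    (hfg t ht).fun_add ((auxEta_deriv n t ht).const_mul c)
  have hu0 : ∀ n, HasDerivAt (u n) (dplus - c) 0 := by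
    intro n
    have hR : HasDerivWithinAt (u n) (dplus - c) (Ici 0) 0 :=
      (hfR.fun_add ((auxEta_right n).const_mul c)).congr_deriv (by ring)
    have hL : HasDerivWithinAt (u n) (dplus - c) (Iic 0) 0 :=
      (hfL.fun_add ((auxEta_left n).const_mul c)).congr_deriv (by rw [hc]; ring)
    have := hR.union hL
    rwa [Ici_union_Iic, hasDerivWithinAt_univ] at this
  have hdae : ∀ n, ∀ᵐ t : ℝ, deriv (u n) t = v n t := by
    intro n
    filter_upwards [hne] with t ht using (hud n t ht).deriv
  have cv := fun (ν : Measure ℝ) (hν : ν ≤ volume) (hi : Integrable (fun t => (g t)^2) ν) =>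
    aux_conv ν hν c (fun _ => 1) g auxEtaD continuous_const (fun _ => zero_le_one)
      (hgm.mono_measure hν) (by simpa using hi)
      (fun n => (auxEtaD_meas n).aestronglyMeasurable) auxEtaD_sq auxEtaD_tendsto
  have cu := fun (ν : Measure ℝ) (hν : ν ≤ volume) (p : ℝ → ℝ) (hp : Continuous p)
      (hp0 : ∀ t, 0 ≤ p t) (hi : Integrable (fun t => p t * (f t)^2) ν) =>
    aux_conv ν hν c p f auxEta hp hp0
      (hfm.mono_measure hν) hi
      (fun n => (auxEta_meas n).aestronglyMeasurable) auxEta_sq auxEta_tendsto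
  simp only [one_mul] at cv
  have cu1 := fun (ν : Measure ℝ) (hν : ν ≤ volume) (hi : Integrable (fun t => (f t)^2) ν) =>
    cu ν hν (fun _ => 1) continuous_const (fun _ => zero_le_one) (by simpa using hi)
  simp only [one_mul] at cu1
  have hmem : ∀ n, MemB1 (u n) := by
    intro n
    refine ⟨fun t => ?_, (cu1 volume le_rfl h0).1 n, ?_, ?_⟩
    · by_cases ht : t = 0
      · rw [ht]; exact (hu0 n).differentiableAt
      · exact (hud n t ht).differentiableAt
    · refine ((cv volume le_rfl h1).1 n).congr ?_
      filter_upwards [hdae n] with t ht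
      rw [ht]
    · exact (cu volume le_rfl (fun t => t^2) (by fun_prop) (fun t => sq_nonneg t) h2).1 n
  have hsh := aux_integrable_sq_shift ξ h0 h2
  have hq : ∀ n, QI a m α ξ (u n) = auxFF a m α ξ (u n) (v n) := by
    intro n
    rw [aux_QI_split a m α ξ (u n) (hmem n)]
    have e : ∀ S : Set ℝ, ∫ t in S, (deriv (u n) t)^2 = ∫ t in S, (v n t)^2 := by
      intro S
      refine integral_congr_ae ?_
      filter_upwards [ae_restrict_of_ae (hdae n)] with t ht
      rw [ht]
    unfold auxFF
    rw [e, e]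
  have hineq : ∀ n, mu1 a m α ξ * nR (u n) ≤ auxFF a m α ξ (u n) (v n) := fun n =>
    hq n ▸ aux_mu1_le a m α ξ ha hm hα (u n) (hmem n)
  have hsc : Continuous (fun t : ℝ => (t - ξ)^2) := by fun_prop
  have tL : Tendsto (fun n => mu1 a m α ξ * nR (u n)) atTop (𝓝 (mu1 a m α ξ * nR f)) :=
    (cu1 volume le_rfl h0).2.const_mul _
  have rI : volume.restrict (Ioi (0:ℝ)) ≤ volume := Measure.restrict_le_self
  have rJ : volume.restrict (Iio (0:ℝ)) ≤ volume := Measure.restrict_le_self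
  have tR : Tendsto (fun n => auxFF a m α ξ (u n) (v n)) atTop (𝓝 (auxFF a m α ξ f g)) := by
    unfold auxFF
    refine Tendsto.add (Tendsto.sub (Tendsto.add ?_ ?_) (Tendsto.const_mul _ ?_))
      (Tendsto.add (Tendsto.const_mul _ (Tendsto.add ?_ ?_)) (Tendsto.const_mul _ ?_))
    · exact (cv _ rI h1.integrableOn).2
    · exact (cu _ rI _ hsc (fun t => sq_nonneg _) hsh.integrableOn).2
    · exact (cu1 _ rI h0.integrableOn).2
    · exact (cv _ rJ h1.integrableOn).2
    · exact (cu _ rJ _ hsc (fun t => sq_nonneg _) hsh.integrableOn).2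
    · exact (cu1 _ rJ h0.integrableOn).2
  exact le_of_tendsto_of_tendsto' tL tR hineq

lemma aux_half_left (ξ c d : ℝ) (f g : ℝ → ℝ)
    (hfc : Continuous f) (hd : Tendsto g (𝓝[<] (0:ℝ)) (𝓝 d))
    (hf : ∀ t : ℝ, t < 0 → HasDerivAt f (g t) t)
    (hg : ∀ t : ℝ, t < 0 → HasDerivAt g (((t - ξ)^2 + c) * f t) t)
    (hpos : ∀ t : ℝ, 0 < f t) (hL : IntegrableOn (fun t => (f t)^2) (Iio 0)) :
    IntegrableOn (fun t => (g t)^2) (Iio 0) ∧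
    IntegrableOn (fun t => t^2 * (f t)^2) (Iio 0) ∧
    (∫ t in Iio (0:ℝ), ((g t)^2 + ((t - ξ)^2 + c) * (f t)^2)) = f 0 * d ∧
    (∫ t in Iio (0:ℝ), 2 * (t - ξ) * (f t)^2) = - (d^2 - (ξ^2 + c) * (f 0)^2) := by
  have key : ∀ h : ℝ → ℝ, ∫ t in Iio (0:ℝ), h t = ∫ t in Ioi (0:ℝ), h (-t) := by
    intro h
    rw [integral_comp_neg_Ioi, neg_zero, integral_Iic_eq_integral_Iio]
  have hL' : IntegrableOn (fun t => (f (-t))^2) (Ioi 0) := by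
    have : IntegrableOn (fun t => (f t)^2) (Iio (-0)) := by simpa using hL
    exact this.comp_neg_Ioi
  have hneg : ∀ t : ℝ, HasDerivAt (fun s : ℝ => -s) (-1) t := fun t => hasDerivAt_neg t
  have k1 : Tendsto (fun t => - g (-t)) (𝓝[>] (0:ℝ)) (𝓝 (-d)) := by
    have : Tendsto (fun t : ℝ => -t) (𝓝[>] 0) (𝓝[<] 0) := by
      simpa using tendsto_neg_nhdsGT (a := (0:ℝ))
    exact (hd.comp this).neg
  have k2 : ∀ t : ℝ, 0 < t → HasDerivAt (fun t => f (-t)) (- g (-t)) t := by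
    intro t ht
    exact ((hf (-t) (by linarith)).comp t (hneg t)).congr_deriv (by ring)
  have k3 : ∀ t : ℝ, 0 < t →
      HasDerivAt (fun t => - g (-t)) (((t - -ξ)^2 + c) * f (-t)) t := by
    intro t ht
    exact ((hg (-t) (by linarith)).comp t (hneg t)).neg.congr_deriv (by ring)
  obtain ⟨h1, h2, h3, h4⟩ := aux_half' (-ξ) c (-d) (fun t => f (-t)) (fun t => - g (-t))
    (hfc.comp continuous_neg) k1 k2 k3 (fun t => hpos _) hL'
  · simp only [neg_sq, neg_zero] at h1 h2 h3 h4
    refine ⟨?_, ?_, ?_, ?_⟩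
    · have : IntegrableOn (fun t => (g (-t))^2) (Ioi (-0)) := by simpa using h1
      simpa using this.comp_neg_Iio
    · have : IntegrableOn (fun t => t^2 * (f (-t))^2) (Ioi (-0)) := by simpa using h2
      simpa using this.comp_neg_Iio
    · rw [key]
      have e : ∀ t : ℝ, (-t - ξ)^2 = (t - -ξ)^2 := fun t => by ring
      simp only [e]
      rw [h3]; ring
    · rw [key, ← h4, ← integral_neg]
      refine integral_congr_ae (Eventually.of_forall fun t => ?_)
      simp only
      ring

lemma aux_integrable_line (h : ℝ → ℝ) (hp : IntegrableOn h (Ioi 0)) (hm : IntegrableOn h (Iio 0)) :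
    Integrable h := by
  rw [← integrableOn_univ, ← Iic_union_Ioi (a := (0:ℝ))]
  refine IntegrableOn.union ?_ hp
  rw [integrableOn_Iic_iff_integrableOn_Iio]
  exact hm

lemma aux_quad (A B : ℝ) (hB : 0 ≤ B) (h : ∀ x : ℝ, 0 ≤ -(x * A) + x^2 * B) : A = 0 := by
  by_contra hA
  have h1 := h (A / (B + 1))
  have h2 : -(A / (B + 1) * A) + (A / (B + 1))^2 * B = -(A^2 / (B+1)^2) := by
    field_simp; ring
  have h3 : 0 < A^2 / (B+1)^2 := by positivity
  linarith

/-- at a minimizer `ξ` of `ξ' ↦ μ₁(a,m,α;ξ')` (with `m > 1`), the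
effective de Gennes parameter `γ = f'(0₊)/f(0)` of the positive normalized ground
state `f` satisfies `γ² = ((a+1)/(m-1))α - (1/m)ξ²`; if moreover
`inf_ξ μ₁ < aα`, then `γ > 0`. -/
theorem effective_deGennes_identity (a m α ξ μ dplus dminus : ℝ) (f g : ℝ → ℝ)
    (ha : 0 < a) (hm : 1 < m) (hα : 0 < α)
    (hmin : ∀ ξ' : ℝ, mu1 a m α ξ ≤ mu1 a m α ξ')
    (hμ : μ = mu1 a m α ξ)
    (hfc : Continuous f)
    (hfg : ∀ t : ℝ, t ≠ 0 → HasDerivAt f (g t) t)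
    (hdp : Tendsto g (𝓝[>] (0:ℝ)) (𝓝 dplus))
    (hdm : Tendsto g (𝓝[<] (0:ℝ)) (𝓝 dminus))
    (htrans : dplus = (1/m) * dminus)
    (hODEp : ∀ t : ℝ, 0 < t → HasDerivAt g (((t - ξ)^2 - α - μ) * f t) t)
    (hODEm : ∀ t : ℝ, t < 0 → HasDerivAt g (((t - ξ)^2 + m * (a * α - μ)) * f t) t)
    (hpos : ∀ t : ℝ, 0 < f t)
    (hnorm : (∫ t : ℝ, (f t)^2) = 1) :
    (dplus / f 0)^2 = ((a + 1) / (m - 1)) * α - (1/m) * ξ^2 ∧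
    (sInf (Set.range (mu1 a m α)) < a * α → 0 < dplus / f 0) := by
  have hm0 : 0 < m := by linarith
  have h0 : Integrable (fun t => (f t)^2) := by
    by_contra hcon
    rw [integral_undef hcon] at hnorm
    exact zero_ne_one hnorm
  obtain ⟨p1, p2, p3, p4⟩ := aux_half' ξ (-α - μ) dplus f g hfc hdp
    (fun t ht => hfg t ht.ne') (fun t ht => (hODEp t ht).congr_deriv (by ring)) hpos
    h0.integrableOn
  obtain ⟨q1, q2, q3, q4⟩ := aux_half_left ξ (m * (a * α - μ)) dminus f g hfc hdm
    (fun t ht => hfg t ht.ne) hODEm hpos h0.integrableOn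
  have h1 := aux_integrable_line _ p1 q1
  have h2 := aux_integrable_line _ p2 q2
  have hs := aux_integrable_sq_shift ξ h0 h2
  have hl := aux_integrable_lin ξ h0 h2
  have htr := fun ξ' => aux_trial a m α ξ' dplus dminus f g ha hm hα hfc hfg hdp hdm h0 h1 h2
  have hnR : nR f = 1 := hnorm
  rw [hnR] at htr
  have hsum := aux_split_line _ h0
  rw [hnorm] at hsum
  have hf0 := hpos 0
  have hadd : Integrable (fun t => (g t)^2 + (t - ξ)^2 * (f t)^2) := h1.add hs
  have hsubx : ∀ x : ℝ, Integrable (fun t => (t - ξ)^2 * (f t)^2 - x * (2 * (t - ξ) * (f t)^2)) :=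
    fun x => hs.sub (hl.const_mul x)
  -- split the energy identities
  have e3 : ∀ (S : Set ℝ) (c : ℝ), (∫ t in S, ((g t)^2 + ((t - ξ)^2 + c) * (f t)^2))
      = (∫ t in S, (g t)^2) + (∫ t in S, (t - ξ)^2 * (f t)^2) + c * ∫ t in S, (f t)^2 := by
    intro S c
    rw [← integral_const_mul, ← integral_add h1.integrableOn hs.integrableOn,
      ← integral_add hadd.integrableOn (h0.const_mul c).integrableOn]
    refine integral_congr_ae (Eventually.of_forall fun t => ?_)
    simp only
    ring
  have esh : ∀ (S : Set ℝ) (x : ℝ), (∫ t in S, (t - (ξ + x))^2 * (f t)^2)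
      = (∫ t in S, (t - ξ)^2 * (f t)^2) - x * (∫ t in S, 2 * (t - ξ) * (f t)^2)
        + x^2 * ∫ t in S, (f t)^2 := by
    intro S x
    rw [← integral_const_mul, ← integral_const_mul,
      ← integral_sub hs.integrableOn (hl.const_mul x).integrableOn,
      ← integral_add (hsubx x).integrableOn (h0.const_mul (x^2)).integrableOn]
    refine integral_congr_ae (Eventually.of_forall fun t => ?_)
    simp only
    ring
  have q3' := q3
  rw [e3] at p3 q3
  have hd : dminus = m * dplus := by rw [htrans]; field_simp
  set P := ∫ t in Ioi (0:ℝ), (f t)^2 with hPd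
  set N := ∫ t in Iio (0:ℝ), (f t)^2 with hN
  have hP0 : 0 ≤ P := integral_nonneg fun t => sq_nonneg _
  have hN0 : 0 ≤ N := integral_nonneg fun t => sq_nonneg _
  -- energy of f is μ
  have hE : ∀ x, auxFF a m α (ξ + x) f g = μ +
      (-(x * ((dplus^2 - (ξ^2 + (-α - μ)) * (f 0)^2)
        + (1/m) * (-(dminus^2 - (ξ^2 + m * (a * α - μ)) * (f 0)^2))))
        + x^2 * (P + (1/m) * N)) := by
    intro x
    unfold auxFF
    rw [esh, esh, p4, q4]
    have hq : (∫ t in Iio (0:ℝ), (g t)^2) =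
      f 0 * (m * dplus) - (∫ t in Iio (0:ℝ), (t - ξ)^2 * (f t)^2) - m * (a * α - μ) * N := by
      rw [← hd]; linarith
    have hp : (∫ t in Ioi (0:ℝ), (g t)^2) =
      -(f 0 * dplus) - (∫ t in Ioi (0:ℝ), (t - ξ)^2 * (f t)^2) - (-α - μ) * P := by linarith
    rw [hq, hp]
    have hP : P = 1 - N := by linarith
    rw [← hPd, ← hN, hP, hd]
    generalize (∫ t in Ioi (0:ℝ), (t - ξ)^2 * (f t)^2) = I1
    generalize (∫ t in Iio (0:ℝ), (t - ξ)^2 * (f t)^2) = I2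
    field_simp
    ring
  have hA := aux_quad _ (P + (1/m) * N) (by positivity) (fun x => by
    have h3 := htr (ξ + x)
    have h4 := hmin (ξ + x)
    rw [hE x] at h3
    have h5 : 0 ≤ (-(x * ((dplus^2 - (ξ^2 + (-α - μ)) * (f 0)^2)
        + (1/m) * (-(dminus^2 - (ξ^2 + m * (a * α - μ)) * (f 0)^2))))
        + x^2 * (P + (1/m) * N)) := by linarith
    exact h5)
  constructor
  · rw [hd] at hA
    have hm1 : m - 1 ≠ 0 := by linarith
    rw [div_pow]
    field_simp
    field_simp at hA
    linarith
  · intro hlt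
    have hinf : sInf (Set.range (mu1 a m α)) = μ := by
      rw [hμ]
      refine IsLeast.csInf_eq ⟨⟨ξ, rfl⟩, ?_⟩
      rintro _ ⟨x, rfl⟩
      exact hmin x
    rw [hinf] at hlt
    have hNpos : 0 < N := by
      rw [hN, setIntegral_pos_iff_support_of_nonneg_ae
        (Eventually.of_forall fun t => sq_nonneg (f t)) h0.integrableOn]
      have : Function.support (fun t => (f t)^2) = univ := by
        ext t; simp [(hpos t).ne']
      rw [this, univ_inter]
      simp
    have i1 : 0 ≤ ∫ t in Iio (0:ℝ), (g t)^2 := integral_nonneg fun t => sq_nonneg _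
    have i2 : 0 ≤ ∫ t in Iio (0:ℝ), (t - ξ)^2 * (f t)^2 := integral_nonneg fun t => by positivity
    have i3 : 0 < m * (a * α - μ) * N := by
      have : 0 < a * α - μ := by linarith
      positivity
    have i4 : 0 < f 0 * dminus := by linarith
    have i5 : 0 < dminus := pos_of_mul_pos_right i4 hf0.le
    have i6 : 0 < dplus := by rw [htrans]; positivity
    positivity
end
end
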